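/- For every FU-filter F on ℕ there is a transfinite sequence (G_α) of FU-filters, indexed by the ordinals α below the initial ordinal of 𝔠⁺ (the cardinal successor of the continuum), such that F <_RK G_α for every α and G_α <_RK G_β whenever α < β. -/

import Mathlib

open Set

/-- `f[G] = {A : f⁻¹(A) ∈ G}`, the image (Rudin–Keisler) filter of a family of sets. -/
def mapFilter {α β : Type*} (f : α → β) (G : Set (Set α)) : Set (Set β) := {A | f ⁻¹' A ∈ G}

/-- `F` is a (proper) filter of subsets. -/
def IsFilterFam {α : Type*} (F : Set (Set α)) : Prop :=
  Set.univ ∈ F ∧ (∀ A ∈ F, ∀ B : Set α, A ⊆ B → B ∈ F) ∧ (∀ A ∈ F, ∀ B ∈ F, A ∩ B ∈ F)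

/-- A free filter: a proper filter containing all cofinite sets. -/
def IsFreeFilter {α : Type*} (F : Set (Set α)) : Prop :=
  IsFilterFam F ∧ (∀ A : Set α, Aᶜ.Finite → A ∈ F) ∧ ∅ ∉ F

/-- `S → F` : `S` is an infinite set converging to the filter `F`, i.e. `S ⊆* A` for all `A ∈ F`. -/
def ConvTo {α : Type*} (S : Set α) (F : Set (Set α)) : Prop :=
  S.Infinite ∧ ∀ A ∈ F, (S \ A).Finite

/-- `F` is relatively equivalent to the Fréchet filter: some `A ∈ F` converges to `F`. -/
def RelFrechet {α : Type*} (F : Set (Set α)) : Prop := ∃ A ∈ F, ConvTo A F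

/-- Rudin–Keisler order: `F ≤_RK G` iff `f[G] = F` for some surjection `f`. -/
def RKle {α : Type*} (F G : Set (Set α)) : Prop :=
  ∃ f : α → α, Function.Surjective f ∧ mapFilter f G = F

/-- `F ≈ G` : there is a bijection `f` with `f[F] = G`. -/
def EquivFilter {α : Type*} (F G : Set (Set α)) : Prop :=
  ∃ f : α → α, Function.Bijective f ∧ mapFilter f F = G

/-- `F <_RK G` : `F ≤_RK G` and `¬ (F ≈ G)`. -/
def RKlt {α : Type*} (F G : Set (Set α)) : Prop := RKle F G ∧ ¬ EquivFilter F G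

/-- An AD-family: an infinite family of infinite sets with pairwise finite intersections. -/
def IsADFamily {α : Type*} (𝒜 : Set (Set α)) : Prop :=
  𝒜.Infinite ∧ (∀ A ∈ 𝒜, A.Infinite) ∧ ∀ A ∈ 𝒜, ∀ B ∈ 𝒜, A ≠ B → (A ∩ B).Finite

/-- The ideal generated by a family `𝒜`: sets almost covered by finitely many members of `𝒜`. -/
def idealGen {α : Type*} (𝒜 : Set (Set α)) : Set (Set α) :=
  {X | ∃ 𝒜' : Finset (Set α), ↑𝒜' ⊆ 𝒜 ∧ (X \ ⋃₀ ↑𝒜').Finite}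

/-- `S_𝒜`: the filter dual to the ideal generated by `𝒜`. -/
def SFam {α : Type*} (𝒜 : Set (Set α)) : Set (Set α) := {F | Fᶜ ∈ idealGen 𝒜}

/-- `F_𝒟 = {F : D ⊆* F for every D ∈ 𝒟}`. -/
def FFam {α : Type*} (𝒟 : Set (Set α)) : Set (Set α) := {F | ∀ D ∈ 𝒟, (D \ F).Finite}

/-- A nowhere MAD family: every set outside the generated ideal contains an infinite set
almost disjoint from every member of `𝒜`. -/
def IsNMAD {α : Type*} (𝒜 : Set (Set α)) : Prop :=
  IsADFamily 𝒜 ∧ ∀ X : Set α, X ∉ idealGen 𝒜 →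
    ∃ B ⊆ X, B.Infinite ∧ ∀ A ∈ 𝒜, (B ∩ A).Finite

/-- A partition of `ℕ` into infinitely many infinite sets. -/
def IsInfPartition (𝒬 : Set (Set ℕ)) : Prop :=
  𝒬.Infinite ∧ (∀ P ∈ 𝒬, P.Infinite) ∧ ⋃₀ 𝒬 = Set.univ ∧
    ∀ P ∈ 𝒬, ∀ Q ∈ 𝒬, P ≠ Q → P ∩ Q = ∅

/-- `F` is a Fréchet–Urysohn filter: every `F`-positive set contains a sequence converging to `F`. -/
def IsFUFilter {α : Type*} (F : Set (Set α)) : Prop :=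
  ∀ A : Set α, Aᶜ ∉ F → ∃ S ⊆ A, ConvTo S F

/-- The trace filter `F|_A = {G ∩ A : G ∈ F}`. -/
def traceFam {α : Type*} (F : Set (Set α)) (A : Set α) : Set (Set α) := {S | ∃ G ∈ F, S = G ∩ A}

/-- Todorčević–Uzcátegui order: there are `A ∈ G⁺`, `B ∈ F` and a bijection `f : A → B`
with `f[G|_A] = F|_B`. -/
def TUle {α : Type*} (F G : Set (Set α)) : Prop :=
  ∃ A : Set α, Aᶜ ∉ G ∧ ∃ B ∈ F, ∃ f : α → α, Set.BijOn f A B ∧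
    {Y : Set α | Y ⊆ B ∧ A ∩ f ⁻¹' Y ∈ traceFam G A} = traceFam F B

/-!
At most continuum many FU-filters `F i` have an FU-filter strictly RK-above all of them; the chain
then arises by transfinite recursion, since every proper initial segment of `𝔠⁺` has at most `𝔠`
elements.

For the upper bound, eventually different functions `c i : ℕ → ℕ` yield maps `f i : α → α` such
that, for each single `i`, some injective `d : ℕ → α` makes `f i ∘ d` any prescribed sequence
while every other `f k ∘ d` is eventually equal to a fixed sequence converging to `F k`. In the
smallest FU-filter containing all `f i ⁻¹' A` with `A ∈ F i`, the range of such a `d` converges as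
soon as `f i ∘ d` converges to `F i`. As `F i` is determined by its convergent sequences, `f i` maps
this filter exactly onto `F i`.

For strictness, only `𝔠` filters are RK-below some `F i`. An almost disjoint family of size `𝔠`
encodes subsets of `𝔠` by FU-filters, so diagonalization gives an FU-filter `K` which is RK-below
no `F i`; an upper bound of `K` and all the `F i` is RK-equivalent to none of the `F i`.
-/

section FUFilters

open Filter Cardinal

universe u

variable {α ι : Type*}

theorem ConvTo.mono {S T : Set α} {F : Set (Set α)} (h : ConvTo S F) (hTS : T ⊆ S)
    (hT : T.Infinite) : ConvTo T F :=
  ⟨hT, fun A hA ↦ (h.2 A hA).subset (sdiff_subset_sdiff_left hTS)⟩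

theorem convTo_range_iff {d : ℕ → α} (hd : d.Injective) {F : Set (Set α)} :
    ConvTo (range d) F ↔ ∀ A ∈ F, ∀ᶠ n in cofinite, d n ∈ A := by
  have range_sdiff (A : Set α) : range d \ A = d '' {n | d n ∉ A} := by
    ext x
    simp only [Set.mem_sdiff, mem_image, mem_ofPred_eq]
    grind
  simp only [ConvTo, infinite_range_of_injective hd, true_and, range_sdiff,
    finite_image_iff hd.injOn, eventually_cofinite]

theorem IsFUFilter.exists_injective_convTo_range {F : Set (Set α)} (hF : IsFUFilter F) {A : Set α}
    (hA : A ∉ F) :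
    ∃ t : ℕ → α, t.Injective ∧ (∀ n, t n ∉ A) ∧ ConvTo (range t) F := by
  obtain ⟨S, hSA, hS⟩ := hF Aᶜ (by rwa [compl_compl])
  let t (n : ℕ) : α := hS.1.natEmbedding S n
  have ht : t.Injective := Subtype.val_injective.comp (hS.1.natEmbedding S).injective
  have htS (n : ℕ) : t n ∈ S := Subtype.prop _
  exact ⟨t, ht, fun n ↦ hSA (htS n),
    hS.mono (range_subset_iff.2 htS) (infinite_range_of_injective ht)⟩

theorem isFreeFilter_FFam {𝒟 : Set (Set α)} {D : Set α} (hD : D ∈ 𝒟) (hinf : D.Infinite) :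
    IsFreeFilter (FFam 𝒟) := by
  refine ⟨⟨fun E _ ↦ by simp, fun A hA B hAB E hE ↦ ?_, fun A hA B hB E hE ↦ ?_⟩,
    fun A hA E _ ↦ hA.subset fun x hx ↦ hx.2, fun h ↦ hinf (by simpa using h D hD)⟩
  · exact (hA E hE).subset (sdiff_subset_sdiff_right hAB)
  · rw [sdiff_inter]
    exact (hA E hE).union (hB E hE)

theorem isFUFilter_FFam (𝒟 : Set (Set α)) : IsFUFilter (FFam 𝒟) := by
  intro A hA
  obtain ⟨D, hD, hDA⟩ : ∃ D ∈ 𝒟, (D \ Aᶜ).Infinite := by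
    by_contra! h
    exact hA h
  have hDconv : ConvTo D (FFam 𝒟) := ⟨hDA.mono sdiff_subset, fun B hB ↦ hB D hD⟩
  exact ⟨D \ Aᶜ, fun x hx ↦ not_not.1 hx.2, hDconv.mono sdiff_subset hDA⟩

/-- The smallest FU-filter containing the family `H`: the sets that almost contain every infinite
set converging to `H`. It is improper when no infinite set converges to `H`. -/
def fuHull (H : Set (Set α)) : Set (Set α) := FFam {S | ConvTo S H}

theorem subset_fuHull (H : Set (Set α)) : H ⊆ fuHull H := fun A hA _ hS ↦ hS.2 A hA

theorem notMem_fuHull_of_disjoint {H : Set (Set α)} {S A : Set α} (hS : ConvTo S H)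
    (hSA : Disjoint S A) : A ∉ fuHull H := fun hA ↦
  hS.1 (by simpa only [hSA.sdiff_eq_left] using hA S hS)

theorem mk_option_le_continuum (hι : #ι ≤ 𝔠) : #(Option ι) ≤ 𝔠 := by
  rw [mk_option]
  exact add_le_of_le aleph0_le_continuum hι (one_le_aleph0.trans aleph0_le_continuum)

theorem exists_pairwise_eventually_ne (hι : #ι ≤ 𝔠) :
    ∃ c : ι → ℕ → ℕ, Pairwise fun i k ↦ ∀ᶠ n in cofinite, c i n ≠ c k n := by
  obtain ⟨j⟩ : Nonempty (ι ↪ (ℕ → Bool)) := lift_mk_le'.1 (by simpa using hι)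
  refine ⟨fun i n ↦ Encodable.encode (PiNat.res (j i) n), fun i k hik ↦ ?_⟩
  obtain ⟨m, hm⟩ := Function.ne_iff.1 (j.injective.ne hik)
  rw [Nat.cofinite_eq_atTop]
  filter_upwards [eventually_gt_atTop m] with n hn h
  exact hm (PiNat.res_eq_res.1 (Encodable.encode_injective h) hn)

theorem exists_almostDisjoint [Infinite α] (hι : #ι ≤ 𝔠) :
    ∃ A : ι → Set α, (∀ i, (A i).Infinite) ∧ Pairwise fun i k ↦ (A i ∩ A k).Finite := by
  obtain ⟨c, hc⟩ := exists_pairwise_eventually_ne hι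
  let e : ℕ × ℕ ↪ α := Nat.pairEquiv.toEmbedding.trans (Infinite.natEmbedding α)
  let graph (i : ι) (n : ℕ) : α := e (n, c i n)
  have graph_eq {i k : ι} {n m : ℕ} (h : graph i n = graph k m) : n = m ∧ c i n = c k m :=
    Prod.ext_iff.1 (e.injective h)
  refine ⟨fun i ↦ range (graph i),
    fun i ↦ infinite_range_of_injective fun n m h ↦ (graph_eq h).1, fun i k hik ↦ ?_⟩
  refine ((eventually_cofinite.1 (hc hik)).image (graph i)).subset ?_
  rintro _ ⟨⟨n, rfl⟩, m, hm⟩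
  obtain ⟨rfl, hnm⟩ := graph_eq hm
  exact ⟨m, not_not.2 hnm.symm, rfl⟩

theorem exists_independent_maps [Infinite α] (hι : #ι ≤ 𝔠) (s : ι → ℕ → α) :
    ∃ f : ι → α → α, ∀ i (t : ℕ → α), ∃ d : ℕ → α, d.Injective ∧ (∀ n, f i (d n) = t n) ∧
      ∀ k ≠ i, ∀ᶠ n in cofinite, f k (d n) = s k n := by
  obtain ⟨c, hc⟩ := exists_pairwise_eventually_ne hι
  obtain ⟨e⟩ : Nonempty (ℕ × ℕ × α ≃ α) := Cardinal.eq.1 (by simp)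
  let f (i : ι) (a : α) : α :=
    match e.symm a with
    | (n, m, b) => if c i n = m then b else s i n
  refine ⟨f, fun i t ↦ ⟨fun n ↦ e (n, c i n, t n), fun n m h ↦ ?_, fun n ↦ by simp [f], ?_⟩⟩
  · exact congrArg Prod.fst (e.injective h)
  · intro k hki
    filter_upwards [hc hki] with n hn
    simp [f, hn]

theorem exists_rkle_upper_bound [Infinite α] [Nonempty ι] (hι : #ι ≤ 𝔠) (F : ι → Set (Set α))
    (hempty : ∀ i, ∅ ∉ F i) (hFU : ∀ i, IsFUFilter (F i)) :
    ∃ G : Set (Set α), (IsFreeFilter G ∧ IsFUFilter G) ∧ ∀ i, RKle (F i) G := by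
  choose s hsinj _ hs using fun i ↦ (hFU i).exists_injective_convTo_range (hempty i)
  obtain ⟨f, hf⟩ := exists_independent_maps hι s
  let H : Set (Set α) := {B | ∃ i, ∃ A ∈ F i, f i ⁻¹' A = B}
  have exists_lift {i : ι} {t : ℕ → α} (htinj : t.Injective) (ht : ConvTo (range t) (F i)) :
      ∃ d : ℕ → α, (∀ n, f i (d n) = t n) ∧ ConvTo (range d) H := by
    obtain ⟨d, hd, hdt, hds⟩ := hf i t
    refine ⟨d, hdt, (convTo_range_iff hd).2 ?_⟩
    rintro _ ⟨k, A, hA, rfl⟩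
    obtain rfl | hki := eq_or_ne k i
    · simpa only [mem_preimage, hdt] using (convTo_range_iff htinj).1 ht A hA
    · filter_upwards [hds k hki, (convTo_range_iff (hsinj k)).1 (hs k) A hA] with n hn hsA
      rwa [mem_preimage, hn]
  have free : IsFreeFilter (fuHull H) := by
    obtain ⟨i⟩ := ‹Nonempty ι›
    obtain ⟨d, -, hd⟩ := exists_lift (hsinj i) (hs i)
    exact isFreeFilter_FFam hd hd.1
  have map_eq (i : ι) : mapFilter (f i) (fuHull H) = F i := by
    refine Subset.antisymm (fun A hA ↦ ?_) fun A hA ↦ subset_fuHull H ⟨i, A, hA, rfl⟩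
    by_contra hAF
    obtain ⟨t, htinj, htA, ht⟩ := (hFU i).exists_injective_convTo_range hAF
    obtain ⟨d, hdt, hd⟩ := exists_lift htinj ht
    have hdA : Disjoint (range d) (f i ⁻¹' A) := by
      rw [disjoint_left, forall_mem_range]
      intro n hn
      exact htA n (hdt n ▸ hn)
    exact notMem_fuHull_of_disjoint hd hdA hA
  have surjective (i : ι) : (f i).Surjective := fun a ↦
    let ⟨d, _, hd, _⟩ := hf i fun _ ↦ a
    ⟨d 0, hd 0⟩
  exact ⟨fuHull H, ⟨free, isFUFilter_FFam _⟩, fun i ↦ ⟨f i, surjective i, map_eq i⟩⟩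

theorem compl_mem_FFam_image_iff {A : ι → Set α} (hinf : ∀ i, (A i).Infinite)
    (hAD : Pairwise fun i k ↦ (A i ∩ A k).Finite) {T : Set ι} {i : ι} :
    (A i)ᶜ ∈ FFam (A '' T) ↔ i ∉ T := by
  simp only [FFam, mem_ofPred_eq, forall_mem_image, sdiff_compl]
  refine ⟨fun h hi ↦ hinf i (by simpa using h hi), fun hi k hk ↦ hAD ?_⟩
  rintro rfl
  exact hi hk

theorem exists_fuFilter_ne [Infinite α] (hι : #ι ≤ 𝔠) (E : ι → Set (Set α)) :
    ∃ K : Set (Set α), (IsFreeFilter K ∧ IsFUFilter K) ∧ ∀ i, E i ≠ K := by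
  obtain ⟨A, hinf, hAD⟩ := exists_almostDisjoint (α := α) (mk_option_le_continuum hι)
  -- The index `none` only serves to make `T` nonempty.
  let T : Set (Option ι) := {o | ∀ i ∈ o, (A o)ᶜ ∈ E i}
  have none_mem : none ∈ T := by simp [T]
  refine ⟨FFam (A '' T),
    ⟨isFreeFilter_FFam (mem_image_of_mem A none_mem) (hinf none), isFUFilter_FFam _⟩, ?_⟩
  intro i hi
  have mem_iff : some i ∈ T ↔ (A (some i))ᶜ ∈ E i := by simp [T]
  rw [hi, compl_mem_FFam_image_iff hinf hAD] at mem_iff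
  exact iff_not_self mem_iff

theorem exists_rklt_upper_bound [Infinite α] (hα : 2 ^ #α ≤ 𝔠) (hι : #ι ≤ 𝔠)
    (F : ι → Set (Set α)) (hempty : ∀ i, ∅ ∉ F i) (hFU : ∀ i, IsFUFilter (F i)) :
    ∃ G : Set (Set α), (IsFreeFilter G ∧ IsFUFilter G) ∧ ∀ i, RKlt (F i) G := by
  have card_maps : #(ι × (α → α)) ≤ 𝔠 := by
    rw [mk_prod]
    refine mul_le_of_le aleph0_le_continuum (by simpa using hι) ?_
    rw [mk_pi, prod_const, lift_id, power_self_eq (aleph0_le_mk α)]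
    simpa using lift_le.2 hα
  obtain ⟨K, hK, hne⟩ := exists_fuFilter_ne card_maps fun p ↦ mapFilter p.2 (F p.1)
  obtain ⟨G, hG, hle⟩ := exists_rkle_upper_bound (mk_option_le_continuum hι)
    (fun o ↦ o.elim K F) (Option.forall.2 ⟨hK.1.2.2, hempty⟩) (Option.forall.2 ⟨hK.2, hFU⟩)
  refine ⟨G, hG, fun i ↦ ⟨hle (some i), ?_⟩⟩
  rintro ⟨f, -, rfl⟩
  obtain ⟨g, -, hg⟩ := hle none
  exact hne (i, g ∘ f) hg

theorem exists_forall_lt_rel {P : Type*} [Preorder ι] [WellFoundedLT ι] {r : P → P → Prop}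
    (h : ∀ (a : ι) (g : Iio a → P), ∃ y, ∀ b, r (g b) y) :
    ∃ g : ι → P, ∀ a b, a < b → r (g a) (g b) := by
  choose y hy using h
  let g : ι → P := WellFoundedLT.fix fun a g ↦ y a fun b ↦ g b b.2
  have g_eq (a : ι) : g a = y a fun b ↦ g b := WellFoundedLT.fix_eq _ a
  exact ⟨g, fun a b hab ↦ by
    rw [g_eq b]
    exact hy b (fun c ↦ g c) ⟨a, hab⟩⟩

theorem mk_Iio_le_lift {κ : Cardinal.{u}} (a : {o : Ordinal.{u} // o < (Order.succ κ).ord}) :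
    #(Iio a) ≤ lift.{u + 1} κ :=
  calc
    #(Iio a) ≤ #(Iio a.1) :=
      mk_le_of_injective (f := fun b ↦ ⟨b.1.1, b.2⟩) fun _ _ h ↦
        Subtype.ext (Subtype.ext (Subtype.mk.inj h))
    _ = lift a.1.card := mk_Iio_ordinal _
    _ ≤ lift κ := lift_le.2 (Order.lt_succ_iff.1 (lt_ord.1 a.2))

theorem statement13_general [Infinite α] (hα : 2 ^ #α ≤ 𝔠) (F : Set (Set α)) (hempty : ∅ ∉ F)
    (hFU : IsFUFilter F) :
    ∃ G : {o : Ordinal // o < (Order.succ 𝔠).ord} → Set (Set α),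
      (∀ a, IsFreeFilter (G a) ∧ IsFUFilter (G a)) ∧
      (∀ a, RKlt F (G a)) ∧
      ∀ a b, a < b → RKlt (G a) (G b) := by
  let P := {G : Set (Set α) // (IsFreeFilter G ∧ IsFUFilter G) ∧ RKlt F G}
  obtain ⟨g, hg⟩ : ∃ g : {o : Ordinal // o < (Order.succ 𝔠).ord} → P,
      ∀ a b, a < b → RKlt (g a).1 (g b).1 := by
    refine exists_forall_lt_rel (r := fun G G' : P ↦ RKlt G.1 G'.1) fun a g ↦ ?_
    obtain ⟨G, hG, hlt⟩ := exists_rklt_upper_bound hα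
      (mk_option_le_continuum ((mk_Iio_le_lift a).trans_eq lift_continuum))
      (fun o ↦ o.elim F fun b ↦ (g b).1)
      (Option.forall.2 ⟨hempty, fun b ↦ (g b).2.1.1.2.2⟩)
      (Option.forall.2 ⟨hFU, fun b ↦ (g b).2.1.2⟩)
    exact ⟨⟨G, hG, hlt none⟩, fun b ↦ hlt (some b)⟩
  exact ⟨fun a ↦ (g a).1, fun a ↦ (g a).2.1, fun a ↦ (g a).2.2, hg⟩

end FUFilters

/-- There is a strictly increasing RK-chain of FU-filters of length `𝔠⁺` above any FU-filter. -/
theorem statement13 (F : Set (Set ℕ)) (hfree : IsFreeFilter F) (hFU : IsFUFilter F) :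
    ∃ G : {α : Ordinal // α < (Order.succ Cardinal.continuum).ord} → Set (Set ℕ),
      (∀ a, IsFreeFilter (G a) ∧ IsFUFilter (G a)) ∧
      (∀ a, RKlt F (G a)) ∧
      ∀ a b, a < b → RKlt (G a) (G b) :=
  statement13_general (by simp) F hfree.2.2 hFU
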